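/- arXiv:1705.09790 — 2 statements merged into one kernel-verified Lean document; each statement's English description precedes it below -/
import Mathlib

section
/- Let n ≥ 2, let X be the unitary Cayley graph on ZMod n, and let d > 1 be a squarefree divisor of n. Then the eigenspace of the adjacency matrix of X over ℂ for the eigenvalue μ(d)·φ(n)/φ(d) has dimension at least φ(d), where φ is Euler's totient function and μ is the Möbius function. -/
/-!
For a primitive `d`-th root of unity `ζ`, where `d ∣ n`, the additive character `x ↦ ζ ^ x` of
`ZMod n` is an eigenvector of the adjacency matrix, with eigenvalue the Ramanujan-type sum
`S(ζ) = ∑ u : (ZMod n)ˣ, ζ ^ u`. Distinct characters are linearly independent and there are `φ(d)`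
primitive `d`-th roots of unity, so it remains to show `φ(d) S(ζ) = μ(d) φ(n)`.

Units of `ZMod d` lift to units of `ZMod n`, so `S(ζ)` is the same for every primitive `ζ`
(`sum_units_pow_eq`). Summing over all `ζ` and exchanging the sums, each `u` contributes the sum
of the `u`-th powers of the primitive `d`-th roots, which `u` merely permutes; that sum is `μ(d)` by
Möbius inversion (`sum_primitiveRoots_eq_moebius`).
-/

open Finset

lemma sum_nthRoots_one (n : ℕ) (hn : 0 < n) :
    ∑ z ∈ Polynomial.nthRootsFinset n (1 : ℂ), z = if n = 1 then 1 else 0 := by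
  have hζ := Complex.isPrimitiveRoot_exp n hn.ne'
  set ζ := Complex.exp (2 * Real.pi * Complex.I / n)
  have himg : Polynomial.nthRootsFinset n (1 : ℂ) = (range n).image (fun i => ζ ^ i) := by
    ext z
    rw [Polynomial.mem_nthRootsFinset hn, mem_image]
    constructor
    · intro h
      have : NeZero n := ⟨hn.ne'⟩
      obtain ⟨i, hi, rfl⟩ := hζ.eq_pow_of_pow_eq_one h
      exact ⟨i, mem_range.2 hi, rfl⟩
    · rintro ⟨i, -, rfl⟩
      rw [← pow_mul, mul_comm, pow_mul, hζ.pow_eq_one, one_pow]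
  rw [himg, sum_image]
  · split_ifs with h
    · subst h; simp
    · exact hζ.geom_sum_eq_zero (by omega)
  · intro i hi j hj h
    exact hζ.pow_inj (mem_range.1 hi) (mem_range.1 hj) h

/-- The primitive `d`-th roots of unity sum to `μ(d)`. -/
lemma sum_primitiveRoots_eq_moebius (d : ℕ) (hd : 0 < d) :
    ∑ z ∈ primitiveRoots d ℂ, z = (ArithmeticFunction.moebius d : ℂ) := by
  have key : ∀ n : ℕ, n > 0 → ∑ i ∈ n.divisors, (∑ z ∈ primitiveRoots i ℂ, z) =
      if n = 1 then 1 else 0 := by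
    intro n hn
    have : NeZero n := ⟨hn.ne'⟩
    rw [← sum_nthRoots_one n hn, IsPrimitiveRoot.nthRoots_one_eq_biUnion_primitiveRoots,
      sum_biUnion]
    intro i _ j _ hij
    exact IsPrimitiveRoot.disjoint hij
  rw [← (ArithmeticFunction.sum_eq_iff_sum_mul_moebius_eq (R := ℂ)).1 key d hd,
    sum_eq_single (d, 1)]
  · simp
  · rintro ⟨a, b⟩ hab hne
    have hb : b ≠ 1 := by
      rintro rfl
      apply hne
      simpa using (Nat.mem_divisorsAntidiagonal.1 hab).1
    simp [hb]
  · intro h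
    exact absurd (Nat.mem_divisorsAntidiagonal.2 ⟨mul_one d, hd.ne'⟩) h

/-- Raising to a power coprime to `d` permutes the primitive `d`-th roots of unity. -/
lemma sum_primitiveRoots_pow (d k : ℕ) (hd : 0 < d) (hk : k.Coprime d) :
    ∑ z ∈ primitiveRoots d ℂ, z ^ k = ∑ z ∈ primitiveRoots d ℂ, z := by
  have hmaps : ∀ z ∈ primitiveRoots d ℂ, z ^ k ∈ primitiveRoots d ℂ := fun z hz =>
    (mem_primitiveRoots hd).2 (((mem_primitiveRoots hd).1 hz).pow_of_coprime k hk)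
  have hinj : Set.InjOn (fun z : ℂ => z ^ k) (primitiveRoots d ℂ) := by
    intro z hz w hw h
    have hz' := ((mem_primitiveRoots hd).1 hz)
    have hw' := ((mem_primitiveRoots hd).1 hw)
    -- `z / w` is killed by both `k` and `d`, which are coprime.
    have hw0 : w ≠ 0 := hw'.ne_zero hd.ne'
    have h1 : orderOf (z / w) ∣ k := orderOf_dvd_of_pow_eq_one (by
      rw [div_pow]; simp only at h; rw [h, div_self (pow_ne_zero _ hw0)])
    have h2 : orderOf (z / w) ∣ d := orderOf_dvd_of_pow_eq_one (by
      rw [div_pow, hz'.pow_eq_one, hw'.pow_eq_one, div_one])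
    have h3 := Nat.eq_one_of_dvd_coprimes hk h1 h2
    rw [orderOf_eq_one_iff, div_eq_one_iff_eq hw0] at h3
    exact h3
  have himg : (primitiveRoots d ℂ).image (fun z => z ^ k) = primitiveRoots d ℂ :=
    eq_of_subset_of_card_le (image_subset_iff.2 hmaps) (card_image_of_injOn hinj).ge
  conv_rhs => rw [← himg]
  rw [sum_image hinj]

/-- `∑ u, ζ ^ u` over the units of `ZMod n` is the same for all primitive `d`-th roots of unity:
if `ξ = ζ ^ i`, then multiplying `u` by a unit of `ZMod n` lifting `i` turns one sum into the
other. -/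
lemma sum_units_pow_eq (n d : ℕ) [NeZero n] (hdn : d ∣ n) {ζ ξ : ℂ}
    (hζ : IsPrimitiveRoot ζ d) (hξ : IsPrimitiveRoot ξ d) :
    ∑ u : (ZMod n)ˣ, ξ ^ (u : ZMod n).val = ∑ u : (ZMod n)ˣ, ζ ^ (u : ZMod n).val := by
  have : NeZero d := ⟨fun h => NeZero.ne n (Nat.eq_zero_of_zero_dvd (h ▸ hdn))⟩
  obtain ⟨i, -, hi, rfl⟩ := hζ.isPrimitiveRoot_iff.1 hξ
  obtain ⟨w, hw⟩ := ZMod.unitsMap_surjective hdn (ZMod.unitOfCoprime i hi)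
  refine Fintype.sum_equiv (Equiv.mulLeft w) _ _ fun u => ?_
  rw [← pow_mul]
  refine pow_eq_pow_of_modEq ?_ hζ.pow_eq_one
  rw [← ZMod.natCast_eq_natCast_iff]
  have hw' : ((w : ZMod n).cast : ZMod d) = i := by
    have := congrArg Units.val hw
    simpa [ZMod.unitsMap_def] using this
  simp only [Equiv.coe_mulLeft, Units.val_mul, Nat.cast_mul, ZMod.natCast_val]
  rw [ZMod.cast_mul hdn, hw']

lemma totient_mul_sum_units_pow (n d : ℕ) [NeZero n] (hdn : d ∣ n) {ζ : ℂ}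
    (hζ : IsPrimitiveRoot ζ d) :
    (d.totient : ℂ) * ∑ u : (ZMod n)ˣ, ζ ^ (u : ZMod n).val =
      (ArithmeticFunction.moebius d : ℂ) * (n.totient : ℂ) := by
  have hd : 0 < d := Nat.pos_of_dvd_of_pos hdn (NeZero.pos n)
  calc (d.totient : ℂ) * ∑ u : (ZMod n)ˣ, ζ ^ (u : ZMod n).val
      = ∑ ξ ∈ primitiveRoots d ℂ, ∑ u : (ZMod n)ˣ, ξ ^ (u : ZMod n).val := by
        rw [sum_congr rfl fun ξ hξ =>
          sum_units_pow_eq n d hdn hζ ((mem_primitiveRoots hd).1 hξ)]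
        rw [sum_const, Complex.card_primitiveRoots, nsmul_eq_mul]
    _ = ∑ u : (ZMod n)ˣ, ∑ ξ ∈ primitiveRoots d ℂ, ξ ^ (u : ZMod n).val := sum_comm
    _ = ∑ u : (ZMod n)ˣ, (ArithmeticFunction.moebius d : ℂ) := by
        refine sum_congr rfl fun u _ => ?_
        rw [sum_primitiveRoots_pow d _ hd ((ZMod.val_coe_unit_coprime u).coprime_dvd_right hdn),
          sum_primitiveRoots_eq_moebius d hd]
    _ = _ := by
        rw [sum_const, card_univ, ZMod.card_units_eq_totient, nsmul_eq_mul, mul_comm]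

lemma sum_adj_eq_sum_units (n : ℕ) [NeZero n] (X : SimpleGraph (ZMod n)) [DecidableRel X.Adj]
    (hX : ∀ x y : ZMod n, X.Adj x y ↔ IsUnit (x - y)) (f : ZMod n → ℂ) (x : ZMod n) :
    ∑ y ∈ X.neighborFinset x, f y = ∑ u : (ZMod n)ˣ, f (x + u) := by
  symm
  refine sum_bij (fun u _ => x + u) ?_ ?_ ?_ (fun _ _ => rfl)
  · intro u _
    rw [SimpleGraph.mem_neighborFinset, hX]
    simp
  · intro u _ v _ h
    exact Units.ext (add_left_cancel h)
  · intro y hy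
    rw [SimpleGraph.mem_neighborFinset, hX, IsUnit.sub_iff] at hy
    obtain ⟨u, hu⟩ := hy
    exact ⟨u, mem_univ _, by rw [hu]; ring⟩

theorem unitaryCayley_eigenspace_dim (n : ℕ) (hn : 2 ≤ n) [NeZero n]
    (X : SimpleGraph (ZMod n)) [DecidableRel X.Adj]
    (hX : ∀ x y : ZMod n, X.Adj x y ↔ IsUnit (x - y))
    (d : ℕ) (hd : 1 < d) (hdn : d ∣ n) (hsq : Squarefree d) :
    Nat.totient d ≤ Module.finrank ℂ
      ↥(Module.End.eigenspace (Matrix.toLin' (X.adjMatrix ℂ))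
        ((ArithmeticFunction.moebius d : ℂ) * (Nat.totient n : ℂ) / (Nat.totient d : ℂ))) := by
  have hd0 : 0 < d := by omega
  have hprim (ζ : primitiveRoots d ℂ) : IsPrimitiveRoot (ζ : ℂ) d :=
    (mem_primitiveRoots hd0).1 ζ.2
  have hpow (ζ : primitiveRoots d ℂ) : (ζ : ℂ) ^ n = 1 :=
    ((hprim ζ).pow_eq_one_iff_dvd n).2 hdn
  let χ (ζ : primitiveRoots d ℂ) : AddChar (ZMod n) ℂ := AddChar.zmodChar n (hpow ζ)
  have hχinj : Function.Injective χ := by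
    intro ζ ξ h
    have h1 := DFunLike.congr_fun h ((1 : ℕ) : ZMod n)
    simp only [χ, AddChar.zmodChar_apply', pow_one] at h1
    exact Subtype.ext h1
  have hli : LinearIndependent ℂ (fun ζ => (χ ζ : ZMod n → ℂ)) :=
    (AddChar.linearIndependent (ZMod n) ℂ).comp χ hχinj
  have hmem (ζ : primitiveRoots d ℂ) : (χ ζ : ZMod n → ℂ) ∈
      Module.End.eigenspace (Matrix.toLin' (X.adjMatrix ℂ))
        ((ArithmeticFunction.moebius d : ℂ) * (Nat.totient n : ℂ) / (Nat.totient d : ℂ)) := by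
    rw [Module.End.mem_eigenspace_iff]
    ext x
    have hφ : (d.totient : ℂ) ≠ 0 := by exact_mod_cast (Nat.totient_pos.2 hd0).ne'
    rw [Matrix.toLin'_apply, SimpleGraph.adjMatrix_mulVec_apply, sum_adj_eq_sum_units n X hX,
      ← totient_mul_sum_units_pow n d hdn (hprim ζ), mul_div_cancel_left₀ _ hφ,
      Pi.smul_apply, smul_eq_mul, sum_mul]
    refine sum_congr rfl fun u _ => ?_
    rw [AddChar.map_add_eq_mul, mul_comm]
    rfl
  have hli' : LinearIndependent ℂ (fun ζ => (⟨χ ζ, hmem ζ⟩ :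
      Module.End.eigenspace (Matrix.toLin' (X.adjMatrix ℂ))
        ((ArithmeticFunction.moebius d : ℂ) * (Nat.totient n : ℂ) / (Nat.totient d : ℂ)))) :=
    LinearIndependent.of_comp (Submodule.subtype _) hli
  have hcard := hli'.fintype_card_le_finrank
  rwa [Fintype.card_coe, Complex.card_primitiveRoots] at hcard
end

section
/- Let n ≥ 2 be an integer that is divisible by the square of some prime, and let X be the unitary Cayley graph on ZMod n. Then there exists a real symmetric n × n matrix A, indexed by ZMod n, with A_{uv} ≠ 0 ⟺ u ∼ v in X for all u ≠ v, such that dim ker A ≥ ∑_{d ∣ n, d not squarefree} φ(d), the sum being over the positive divisors d of n divisible by the square of a prime; that is, M(X) ≥ ∑_{d ∣ n, d not squarefree} φ(d). -/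
open Finset

/-!
Let `r` be the radical of `n`. A residue modulo `n` is a unit if and only if its reduction modulo
`r` is one (`isUnit_castHom_radical_iff`), so the adjacency matrix of the unitary Cayley graph on
`ZMod n` is a blow-up of the corresponding matrix on `ZMod r`: its entry at `(u, v)` depends only
on the reductions of `u` and `v` modulo `r`. Its rank is therefore at most `r`, and its nullity is
at least `n - r`. On the other hand the squarefree divisors of `n` are exactly the divisors of `r`,
so Gauss's identity `∑_{d ∣ m} φ(d) = m`, applied to `n` and to `r`, shows that the sum of `φ(d)`
over the non-squarefree divisors of `n` equals `n - r` (`sum_totient_not_squarefree_add_radical`).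
-/

open UniqueFactorizationMonoid in
lemma sum_totient_not_squarefree_add_radical {n : ℕ} (hn : n ≠ 0) :
    (∑ d ∈ n.divisors.filter (fun d => ¬ Squarefree d), Nat.totient d) + radical n = n := by
  have hdiv : n.divisors.filter (fun d => Squarefree d) = (radical n).divisors := by
    ext d
    simp only [mem_filter, Nat.mem_divisors]
    constructor
    · rintro ⟨⟨hd, -⟩, hsq⟩
      exact ⟨(dvd_radical_iff hsq.isRadical hn).2 hd, radical_ne_zero⟩
    · rintro ⟨hd, -⟩
      exact ⟨⟨hd.trans radical_dvd_self, hn⟩, squarefree_radical.squarefree_of_dvd hd⟩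
  have hsplit := sum_filter_add_sum_filter_not n.divisors (fun d => Squarefree d) Nat.totient
  rw [hdiv, Nat.sum_totient, Nat.sum_totient] at hsplit
  omega

open UniqueFactorizationMonoid in
lemma isUnit_castHom_radical_iff {n : ℕ} [NeZero n] (x : ZMod n) :
    IsUnit (ZMod.castHom (radical_dvd_self (a := n)) (ZMod (radical n)) x) ↔ IsUnit x := by
  obtain ⟨m, rfl⟩ := ZMod.natCast_zmod_surjective x
  rw [map_natCast, ZMod.isUnit_iff_coprime, ZMod.isUnit_iff_coprime]
  refine ⟨fun h => ?_, fun h => h.coprime_dvd_right radical_dvd_self⟩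
  exact (h.pow_right n).coprime_dvd_right (Nat.dvd_radical_pow_self (NeZero.ne n))

open UniqueFactorizationMonoid in
theorem unitaryCayley_maxNullity_ge_sum (n : ℕ) (hn : 2 ≤ n) [NeZero n]
    (hnsq : ∃ p : ℕ, p.Prime ∧ p ^ 2 ∣ n)
    (X : SimpleGraph (ZMod n))
    (hX : ∀ x y : ZMod n, X.Adj x y ↔ IsUnit (x - y)) :
    ∃ A : Matrix (ZMod n) (ZMod n) ℝ, A.IsSymm ∧
      (∀ u v : ZMod n, u ≠ v → (A u v ≠ 0 ↔ X.Adj u v)) ∧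
      (∑ d ∈ n.divisors.filter (fun d => ¬ Squarefree d), Nat.totient d) ≤
        Module.finrank ℝ ↥(LinearMap.ker (Matrix.toLin' A)) := by
  classical
  have : NeZero (radical n) := ⟨radical_ne_zero⟩
  let f := ZMod.castHom (radical_dvd_self (a := n)) (ZMod (radical n))
  let B : Matrix (ZMod (radical n)) (ZMod (radical n)) ℝ :=
    Matrix.of fun a b => if IsUnit (a - b) then 1 else 0
  refine ⟨B.submatrix f f, ?_, ?_, ?_⟩
  · ext u v
    simp only [B, Matrix.transpose_apply, Matrix.submatrix_apply, Matrix.of_apply]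
    simp only [← neg_sub (f v) (f u), IsUnit.neg_iff]
  · intro u v _
    rw [hX, ← isUnit_castHom_radical_iff, map_sub]
    simp [B, f]
  · have hrank : (B.submatrix f f).rank ≤ radical n :=
      (B.rank_submatrix_le f f).trans (B.rank_le_card_width.trans (ZMod.card _).le)
    have hnull := LinearMap.finrank_range_add_finrank_ker (Matrix.toLin' (B.submatrix f f))
    rw [Matrix.toLin'_apply', ← Matrix.rank, ← Matrix.toLin'_apply'] at hnull
    rw [Module.finrank_fintype_fun_eq_card, ZMod.card] at hnull
    have hsum := sum_totient_not_squarefree_add_radical (NeZero.ne n)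
    omega
end
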